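/- arXiv:2003.01830 — 2 statements merged into one kernel-verified Lean document; each statement's English description precedes it below -/
import Mathlib

section
/- Let s, s' be rational clusters of f with s ⊊ s∧s' ⊋ s', and let w_s, w_{s'} be rational centres of s and s' respectively. Then ρ_{s∧s'} = v(w_s − w_{s'}) = d_{s∧s'}. In particular, any cluster t of f having at least two children that are rational clusters satisfies d_t = ρ_t ∈ ℤ, and t is itself a rational cluster. -/
open Polynomial
open scoped Classical

namespace ClusterPicture

variable {K Kbar : Type*} [Field K] [Field Kbar] [Algebra K Kbar]

lemma zero_lt_top' : (0 : WithTop ℚ) < ⊤ := by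
  simp

lemma withTop_add_pos {a b : WithTop ℚ} (ha : 0 ≤ a) (hb : 0 < b) : 0 < a + b := by
  rcases eq_or_ne a ⊤ with h | h
  · subst h; rw [top_add]; exact zero_lt_top'
  · lift a to ℚ using h
    rcases eq_or_ne b ⊤ with h' | h'
    · subst h'; rw [add_top]; exact zero_lt_top'
    · lift b to ℚ using h'
      have ha' : (0 : ℚ) ≤ a := by exact_mod_cast ha
      have hb' : (0 : ℚ) < b := by exact_mod_cast hb
      exact_mod_cast add_pos_of_nonneg_of_pos ha' hb'

/-- The setting of the paper: `K` is a complete discretely valued field, with valuation `v`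
normalised so that `v(K^×) = ℤ`, `Kbar` is an algebraic closure of `K`, and `v` is (the unique)
extension of the valuation to a `ℚ ∪ {∞}`-valued valuation on `Kbar`. -/
structure Setup (K Kbar : Type*) [Field K] [Field Kbar] [Algebra K Kbar] : Type _ where
  /-- the valuation on the algebraic closure -/
  v : Kbar → WithTop ℚ
  v_top_iff : ∀ x : Kbar, v x = ⊤ ↔ x = 0
  v_one : v 1 = 0
  v_neg : ∀ x : Kbar, v (-x) = v x
  v_mul : ∀ x y : Kbar, v (x * y) = v x + v y
  v_add : ∀ x y : Kbar, min (v x) (v y) ≤ v (x + y)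
  /-- the valuation is normalised: nonzero elements of `K` have integer valuation -/
  v_base_int : ∀ x : K, x ≠ 0 → ∃ n : ℤ, v (algebraMap K Kbar x) = ((n : ℚ) : WithTop ℚ)
  /-- the valuation is surjective onto `ℤ` on `K^×`: there is a uniformiser -/
  exists_uniformiser : ∃ π : K, v (algebraMap K Kbar π) = ((1 : ℚ) : WithTop ℚ)
  /-- `Kbar` is an algebraic closure of `K` -/
  algClosed : IsAlgClosed Kbar
  algebraic : Algebra.IsAlgebraic K Kbar
  /-- `K` is complete with respect to the valuation -/
  complete : ∀ a : ℕ → K,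
    (∀ q : ℚ, ∃ N : ℕ, ∀ m, N ≤ m → ∀ n, N ≤ n →
      ((q : ℚ) : WithTop ℚ) ≤ v (algebraMap K Kbar (a m - a n))) →
    ∃ b : K, ∀ q : ℚ, ∃ N : ℕ, ∀ n, N ≤ n →
      ((q : ℚ) : WithTop ℚ) ≤ v (algebraMap K Kbar (a n - b))

/-- Valuation of an element of the base field `K`. -/
def Setup.vK (S : Setup K Kbar) (x : K) : WithTop ℚ := S.v (algebraMap K Kbar x)

/-- The finite set of roots of `f` in the algebraic closure `Kbar`. -/
noncomputable def rootFinset (f : K[X]) : Finset Kbar :=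
  (f.map (algebraMap K Kbar)).roots.toFinset

/-- A cluster for `f`: a nonempty subset of the set of roots of `f` cut out by a `v`-adic disc. -/
def IsCluster (S : Setup K Kbar) (f : K[X]) (s : Finset Kbar) : Prop :=
  s.Nonempty ∧ ∃ (z : Kbar) (δ : ℚ),
    s = (rootFinset f).filter fun r => ((δ : ℚ) : WithTop ℚ) ≤ S.v (r - z)

/-- The depth `d_s = min_{r,r' ∈ s} v (r - r')` of a cluster. -/
noncomputable def depth (S : Setup K Kbar) (s : Finset Kbar) : WithTop ℚ :=
  s.inf fun r => s.inf fun r' => S.v (r - r')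

/-- `min_{r ∈ s} v (r - z)`, for `z ∈ Kbar`. -/
noncomputable def dmin (S : Setup K Kbar) (s : Finset Kbar) (z : Kbar) : WithTop ℚ :=
  s.inf fun r => S.v (r - z)

/-- `min_{r ∈ s} v (r - w)`, for `w ∈ K`. -/
noncomputable def dminK (S : Setup K Kbar) (s : Finset Kbar) (w : K) : WithTop ℚ :=
  dmin S s (algebraMap K Kbar w)

/-- `w ∈ K` is a rational centre of `s` if it maximises `min_{r ∈ s} v (r - w)`.
For a proper cluster `s` with rational centre `w`, the radius `ρ_s` is `dminK S s w`. -/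
def IsRationalCentre (S : Setup K Kbar) (s : Finset Kbar) (w : K) : Prop :=
  ∀ w' : K, dminK S s w' ≤ dminK S s w

/-- A rational cluster: a cluster cut out by a disc with centre in `K`. -/
def IsRationalCluster (S : Setup K Kbar) (f : K[X]) (s : Finset Kbar) : Prop :=
  s.Nonempty ∧ ∃ (w : K) (δ : ℚ),
    s = (rootFinset f).filter fun r => ((δ : ℚ) : WithTop ℚ) ≤ S.v (r - algebraMap K Kbar w)

/-- A cluster centred at `w ∈ K`. -/
def IsClusterCentredAt (S : Setup K Kbar) (f : K[X]) (w : K) (s : Finset Kbar) : Prop :=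
  s.Nonempty ∧ ∃ δ : ℚ,
    s = (rootFinset f).filter fun r => ((δ : ℚ) : WithTop ℚ) ≤ S.v (r - algebraMap K Kbar w)

/-- The cluster picture of `f` is almost rational: every proper cluster `s` with
`|s| > |ρ_s|_p` satisfies `d_s = ρ_s`. -/
def AlmostRational (S : Setup K Kbar) (f : K[X]) (p : ℕ) : Prop :=
  ∀ s : Finset Kbar, IsCluster S f s → 1 < s.card →
    ∀ (w : K) (ρ : ℚ), IsRationalCentre S s w → dminK S s w = ((ρ : ℚ) : WithTop ℚ) →
      padicNorm p ρ < (s.card : ℚ) → depth S s = ((ρ : ℚ) : WithTop ℚ)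

/-- The slope of the `j`-th edge of the polygon with vertices `(i_j, c_j)`. -/
def NPslope {s : ℕ} (i : Fin (s + 1) → ℕ) (c : Fin (s + 1) → ℚ) (j : Fin s) : ℚ :=
  (c j.succ - c j.castSucc) / ((i j.succ : ℚ) - (i j.castSucc : ℚ))

/-- `(i_0, c_0), …, (i_s, c_s)` are the vertices of the Newton polygon of `f`:
the points `(i_j, c_j)` are among the points `(m, v(a_m))`, the first and last vertices lie
above the trailing and leading coefficients, the slopes of consecutive edges strictly
increase, and every point `(m, v(a_m))` lies on or above (the line spanned by) every edge. -/
structure IsNPVertices (S : Setup K Kbar) (f : K[X]) (s : ℕ)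
    (i : Fin (s + 1) → ℕ) (c : Fin (s + 1) → ℚ) : Prop where
  mono : StrictMono i
  first : i 0 = f.natTrailingDegree
  last : i (Fin.last s) = f.natDegree
  vert : ∀ j, S.vK (f.coeff (i j)) = ((c j : ℚ) : WithTop ℚ)
  slope_mono : StrictMono (NPslope i c)
  support : ∀ (j : Fin s) (m : ℕ) (q : ℚ), S.vK (f.coeff m) = ((q : ℚ) : WithTop ℚ) →
    (c j.succ - c j.castSucc) * ((m : ℚ) - (i j.castSucc : ℚ)) ≤
      (q - c j.castSucc) * ((i j.succ : ℚ) - (i j.castSucc : ℚ))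

/-- The valuation ring of `Kbar`. -/
def intRing (S : Setup K Kbar) : Subring Kbar where
  carrier := {x : Kbar | (0 : WithTop ℚ) ≤ S.v x}
  zero_mem' := by
    simp only [Set.mem_setOf_eq, (S.v_top_iff 0).mpr rfl]
    exact le_top
  one_mem' := by
    simp only [Set.mem_setOf_eq, S.v_one]
    exact le_refl _
  add_mem' := by
    intro a b ha hb
    exact le_trans (le_min ha hb) (S.v_add a b)
  mul_mem' := by
    intro a b ha hb
    simp only [Set.mem_setOf_eq, S.v_mul a b]
    exact add_nonneg ha hb
  neg_mem' := by
    intro a ha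
    simpa only [Set.mem_setOf_eq, S.v_neg] using ha

lemma mem_intRing {S : Setup K Kbar} {x : Kbar} :
    x ∈ intRing S ↔ (0 : WithTop ℚ) ≤ S.v x := Iff.rfl

/-- The maximal ideal of the valuation ring of `Kbar`. -/
def maxIdeal (S : Setup K Kbar) : Ideal (intRing S) where
  carrier := {x : intRing S | (0 : WithTop ℚ) < S.v (x : Kbar)}
  zero_mem' := by
    show (0 : WithTop ℚ) < S.v ((0 : intRing S) : Kbar)
    rw [show ((0 : intRing S) : Kbar) = 0 from rfl, (S.v_top_iff 0).mpr rfl]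
    exact zero_lt_top'
  add_mem' := by
    intro a b ha hb
    show (0 : WithTop ℚ) < S.v ((a : Kbar) + (b : Kbar))
    exact lt_of_lt_of_le (lt_min ha hb) (S.v_add _ _)
  smul_mem' := by
    intro c x hx
    show (0 : WithTop ℚ) < S.v ((c : Kbar) * (x : Kbar))
    rw [S.v_mul]
    exact withTop_add_pos c.2 hx

/-- The residue field of `Kbar`; it is an algebraic closure of the residue field `k` of `K`. -/
abbrev Residue (S : Setup K Kbar) : Type _ := intRing S ⧸ maxIdeal S

/-- Reduction to the residue field (with junk value `0` on non-integral elements). -/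
noncomputable def red (S : Setup K Kbar) (x : Kbar) : Residue S :=
  if h : (0 : WithTop ℚ) ≤ S.v x then Ideal.Quotient.mk (maxIdeal S) ⟨x, mem_intRing.mpr h⟩
  else 0

/-- The reduction `f̄|_L` of `f` along the edge `L` of its Newton polygon with endpoints
`(i₁, q₁)` and `(i₂, q₂)`, of slope `ρ = nρ / n` where `n` is the denominator of `ρ`;
`π` is a uniformiser of `K`.  This is the reduction of `π^{-q₁}·(f|_L)(π^{-nρ}·x)`, where
`f|_L (x) = ∑_j a_{n j + i₁} x^j`. -/
noncomputable def redEdge (S : Setup K Kbar) (π : K) (f : K[X])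
    (i₁ i₂ : ℕ) (q₁ nρ : ℤ) (n : ℕ) : Polynomial (Residue S) :=
  ∑ j ∈ Finset.range ((i₂ - i₁) / n + 1),
    Polynomial.C (red S (algebraMap K Kbar (f.coeff (n * j + i₁)) *
      (algebraMap K Kbar π) ^ (-(q₁ + (j : ℤ) * nρ)))) * Polynomial.X ^ j

/-- `f` is NP-regular (`Δ_v`-regular in dimension 1): for every edge `L` of its Newton
polygon, the reduction `f̄|_L` has no multiple roots in the algebraic closure of the residue
field, i.e. is separable. -/
def NPRegular (S : Setup K Kbar) (π : K) (f : K[X]) : Prop :=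
  ∀ (s : ℕ) (i : Fin (s + 1) → ℕ) (c : Fin (s + 1) → ℚ),
    IsNPVertices S f s i c →
    ∀ (j : Fin s) (q₁ nρ : ℤ) (n : ℕ),
      (q₁ : ℚ) = c j.castSucc →
      n = (NPslope i c j).den →
      (nρ : ℚ) = (n : ℚ) * NPslope i c j →
      (redEdge S π f (i j.castSucc) (i j.succ) q₁ nρ n).Separable

/-- The vertex-index function of the Newton polygon of `f(x+w)`, in terms of the sizes of
the clusters `s_1 ⊂ … ⊂ s_{n+1}` centred at `w`; here `t` is the prescribed first index. -/
def vertIdx {n : ℕ} (t : ℕ) (s : Fin (n + 1) → Finset Kbar) : Fin (n + 2) → ℕ :=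
  fun j => Fin.cases (motive := fun _ => ℕ) t (fun j' => (s j').card) j

/-- The vertex-value function of the Newton polygon of `f(x+w)`: the vertex over `|s_j|` has
second coordinate `ε_{s_j} - |s_j|·ρ_{s_j}`; `c0` is the prescribed value at the first vertex. -/
def vertVal {n : ℕ} (c0 : ℚ) (s : Fin (n + 1) → Finset Kbar) (ρ ε : Fin (n + 1) → ℚ) :
    Fin (n + 2) → ℚ :=
  fun j => Fin.cases (motive := fun _ => ℚ) c0 (fun j' => ε j' - ((s j').card : ℚ) * ρ j') j

/-!
Everything is ultrametric geometry on the roots. If the discs `D(w, δ)` and `D(w', δ')` cut out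
incomparable clusters, then `e = v(w - w')` is smaller than both `δ` and `δ'`, so `v(r - r') = e`
for every `r` in the first cluster and every `r'` in the second. The disc `D(w, e)` contains both
clusters, hence their wedge `t`, and so `e ≤ min_{x ∈ t} v(x - w) ≤ d_t ≤ v(r - r') = e`. Two
distinct children of a cluster are incomparable with that cluster as their wedge, which reduces the
second assertion to this computation.
-/

section Ultrametric

variable {L Γ₀ : Type*} [Ring L] [LinearOrderedAddCommMonoidWithTop Γ₀] (v : AddValuation L Γ₀)

lemma le_val_sub_trans {q : Γ₀} {x y z : L} (hxy : q ≤ v (x - y)) (hyz : q ≤ v (y - z)) :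
    q ≤ v (x - z) := by
  simpa only [sub_add_sub_cancel] using v.map_le_add hxy hyz

lemma val_sub_eq_val_sub_of_lt {x y z z' : L} (hx : v (z - z') < v (x - z))
    (hy : v (z - z') < v (y - z')) : v (x - y) = v (z - z') := by
  have hxz' : v (x - z') = v (z - z') := by
    simpa only [sub_add_sub_cancel] using v.map_add_eq_of_lt_right hx
  have hlt : v (x - z') < v (z' - y) := by rwa [hxz', v.map_sub_swap z' y]
  calc v (x - y) = v ((x - z') + (z' - y)) := by rw [sub_add_sub_cancel]
    _ = v (x - z') := v.map_add_eq_of_lt_left hlt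
    _ = v (z - z') := hxz'

/-- `min_{x ∈ s} v (x - z)`, i.e. `dmin` for an arbitrary valued ring; it is `⊤` for empty `s`. -/
def valRadius (s : Finset L) (z : L) : Γ₀ :=
  s.inf fun x => v (x - z)

/-- `min_{x, y ∈ s} v (x - y)`, i.e. `depth` for an arbitrary valued ring. -/
def valDepth (s : Finset L) : Γ₀ :=
  s.inf fun x => s.inf fun y => v (x - y)

variable {v} {s : Finset L} {x y : L}

lemma valRadius_le (hx : x ∈ s) (z : L) : valRadius v s z ≤ v (x - z) :=
  Finset.inf_le (f := fun x => v (x - z)) hx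

lemma valDepth_le (hx : x ∈ s) (hy : y ∈ s) : valDepth v s ≤ v (x - y) :=
  (Finset.inf_le hx).trans (Finset.inf_le (f := fun y => v (x - y)) hy)

lemma valRadius_le_valDepth (s : Finset L) (z : L) : valRadius v s z ≤ valDepth v s := by
  refine Finset.le_inf fun x hx => Finset.le_inf fun y hy => ?_
  refine le_val_sub_trans v (valRadius_le hx z) ?_
  rw [v.map_sub_swap]
  exact valRadius_le hy z

/-- `c` maximises `valRadius v s (ι c)` among the admissible centres `ι : C → L`. For
`ι = algebraMap K L` this is the notion of a rational centre. -/
def IsBestCentre {C : Type*} (v : AddValuation L Γ₀) (ι : C → L) (s : Finset L) (c : C) : Prop :=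
  ∀ c' : C, valRadius v s (ι c') ≤ valRadius v s (ι c)

lemma IsBestCentre.valRadius_eq_valDepth {C : Type*} {ι : C → L} {a c : C}
    (ha : IsBestCentre v ι s a) (hc : valRadius v s (ι c) = valDepth v s) :
    valRadius v s (ι a) = valDepth v s :=
  (valRadius_le_valDepth s (ι a)).antisymm (hc ▸ ha c)

lemma isBestCentre_of_valRadius_eq_valDepth {C : Type*} {ι : C → L} {c : C}
    (hc : valRadius v s (ι c) = valDepth v s) : IsBestCentre v ι s c :=
  fun c' => hc ▸ valRadius_le_valDepth s (ι c')

end Ultrametric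

section DiscTraces

variable {L Γ C C' : Type*} [Ring L] [AddCommGroup Γ] [LinearOrder Γ] [IsOrderedAddMonoid Γ]

/-- The trace on the finite set `R` of the closed disc with centre `z` and radius `δ`. -/
noncomputable def discTrace (v : AddValuation L (WithTop Γ)) (R : Finset L) (z : L) (δ : Γ) :
    Finset L :=
  R.filter fun r => (δ : WithTop Γ) ≤ v (r - z)

/-- A nonempty trace on `R` of a disc centred at a point of the family `ι : C → L`. For `R` the
roots of a polynomial over `K`, taking `ι = id` gives the clusters, and `ι = algebraMap K L` the
rational clusters. -/
def IsDiscTrace (v : AddValuation L (WithTop Γ)) (R : Finset L) (ι : C → L) (s : Finset L) :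
    Prop :=
  s.Nonempty ∧ ∃ (c : C) (δ : Γ), s = discTrace v R (ι c) δ

/-- `t` is the wedge `s ∧ s'`: the smallest cluster containing both `s` and `s'`. -/
def IsWedge (v : AddValuation L (WithTop Γ)) (R s s' t : Finset L) : Prop :=
  (IsDiscTrace v R id t ∧ s ⊆ t ∧ s' ⊆ t) ∧
    ∀ u : Finset L, IsDiscTrace v R id u → s ⊆ u → s' ⊆ u → t ⊆ u

/-- `s` is a child of `t`: it is strictly contained in `t`, with no cluster strictly in between.
That `s` is itself a cluster is not part of the definition. -/
def IsChild (v : AddValuation L (WithTop Γ)) (R s t : Finset L) : Prop :=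
  s ⊂ t ∧ ∀ u : Finset L, IsDiscTrace v R id u → s ⊂ u → u ⊆ t → u = t

variable {v : AddValuation L (WithTop Γ)} {R s s' t u : Finset L} {ι : C → L} {κ : C' → L}
  {x z z' : L} {δ δ' : Γ}

lemma mem_discTrace : x ∈ discTrace v R z δ ↔ x ∈ R ∧ (δ : WithTop Γ) ≤ v (x - z) :=
  Finset.mem_filter

lemma le_valRadius_of_subset_discTrace (h : s ⊆ discTrace v R z δ) :
    (δ : WithTop Γ) ≤ valRadius v s z :=
  Finset.le_inf fun _ hx => (mem_discTrace.mp (h hx)).2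

lemma discTrace_subset_discTrace (hδ : δ' ≤ δ) (hz : (δ' : WithTop Γ) ≤ v (z - z')) :
    discTrace v R z δ ⊆ discTrace v R z' δ' := fun _ hx =>
  have ⟨hxR, hxz⟩ := mem_discTrace.mp hx
  mem_discTrace.mpr ⟨hxR, le_val_sub_trans v ((WithTop.coe_le_coe.mpr hδ).trans hxz) hz⟩

lemma discTrace_eq_discTrace_of_le_valRadius (hne : (discTrace v R z δ).Nonempty)
    (h : (δ : WithTop Γ) ≤ valRadius v (discTrace v R z δ) z') :
    discTrace v R z δ = discTrace v R z' δ := by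
  obtain ⟨r, hr⟩ := hne
  have hz'z : (δ : WithTop Γ) ≤ v (z' - z) := by
    refine le_val_sub_trans v ?_ (mem_discTrace.mp hr).2
    rw [v.map_sub_swap]
    exact h.trans (valRadius_le hr z')
  exact (discTrace_subset_discTrace le_rfl (v.map_sub_swap z z' ▸ hz'z)).antisymm
    (discTrace_subset_discTrace le_rfl hz'z)

lemma val_sub_lt_of_incompRel
    (h : IncompRel (· ⊆ ·) (discTrace v R z δ) (discTrace v R z' δ')) : v (z - z') < δ := by
  by_contra! hδ
  rcases le_total δ' δ with hle | hle
  · exact h.1 (discTrace_subset_discTrace hle ((WithTop.coe_le_coe.mpr hle).trans hδ))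
  · exact h.2 (discTrace_subset_discTrace hle (v.map_sub_swap z z' ▸ hδ))

lemma val_sub_eq_of_incompRel {x' : L}
    (h : IncompRel (· ⊆ ·) (discTrace v R z δ) (discTrace v R z' δ'))
    (hx : x ∈ discTrace v R z δ) (hx' : x' ∈ discTrace v R z' δ') : v (x - x') = v (z - z') :=
  val_sub_eq_val_sub_of_lt v ((val_sub_lt_of_incompRel h).trans_le (mem_discTrace.mp hx).2)
    (v.map_sub_swap z' z ▸ (val_sub_lt_of_incompRel h.symm).trans_le (mem_discTrace.mp hx').2)

lemma IsDiscTrace.isDiscTrace_id (hs : IsDiscTrace v R ι s) : IsDiscTrace v R id s :=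
  have ⟨hne, c, hc⟩ := hs
  ⟨hne, ι c, hc⟩

lemma IsDiscTrace.subset_or_subset (ht : IsDiscTrace v R ι t) (hu : IsDiscTrace v R κ u)
    (hxt : x ∈ t) (hxu : x ∈ u) : t ⊆ u ∨ u ⊆ t := by
  obtain ⟨-, c, δ, rfl⟩ := ht
  obtain ⟨-, c', δ', rfl⟩ := hu
  by_contra! h
  have htop : v (ι c - κ c') = ⊤ := by
    rw [← val_sub_eq_of_incompRel h hxt hxu, sub_self, v.map_zero]
  exact not_top_lt (htop ▸ val_sub_lt_of_incompRel h)

lemma IsDiscTrace.eq_discTrace_of_isBestCentre {c : C} (hs : IsDiscTrace v R ι s)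
    (hc : IsBestCentre v ι s c) : ∃ δ : Γ, s = discTrace v R (ι c) δ := by
  obtain ⟨hne, c₀, δ, rfl⟩ := hs
  exact ⟨δ, discTrace_eq_discTrace_of_le_valRadius hne
    ((le_valRadius_of_subset_discTrace subset_rfl).trans (hc c₀))⟩

lemma IsDiscTrace.of_valRadius_eq_valDepth {c : C'} (ht : IsDiscTrace v R ι t)
    (hc : valRadius v t (κ c) = valDepth v t) : IsDiscTrace v R κ t := by
  obtain ⟨hne, c₀, δ, rfl⟩ := ht
  refine ⟨hne, c, δ, discTrace_eq_discTrace_of_le_valRadius hne ?_⟩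
  rw [hc]
  exact (le_valRadius_of_subset_discTrace subset_rfl).trans (valRadius_le_valDepth _ (ι c₀))

lemma IsWedge.incompRel (h : IsWedge v R s s' t) (hs : IsDiscTrace v R ι s)
    (hs' : IsDiscTrace v R κ s') (hst : s ⊂ t) (hst' : s' ⊂ t) : IncompRel (· ⊆ ·) s s' :=
  ⟨fun hss' => hst'.not_subset (h.2 s' hs'.isDiscTrace_id hss' subset_rfl),
    fun hs's => hst.not_subset (h.2 s hs.isDiscTrace_id subset_rfl hs's)⟩

lemma IsWedge.val_sub_le_valRadius
    (h : IsWedge v R (discTrace v R z δ) (discTrace v R z' δ') t)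
    (hinc : IncompRel (· ⊆ ·) (discTrace v R z δ) (discTrace v R z' δ')) :
    v (z - z') ≤ valRadius v t z := by
  have hlt := val_sub_lt_of_incompRel hinc
  have hlt' := val_sub_lt_of_incompRel hinc.symm
  rw [v.map_sub_swap] at hlt'
  obtain ⟨e, he⟩ := WithTop.ne_top_iff_exists.mp hlt.ne_top
  rw [← he, WithTop.coe_lt_coe] at hlt hlt'
  have hsub : discTrace v R z δ ⊆ discTrace v R z e :=
    discTrace_subset_discTrace hlt.le (by rw [sub_self, v.map_zero]; exact le_top)
  have hsub' : discTrace v R z' δ' ⊆ discTrace v R z e :=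
    discTrace_subset_discTrace hlt'.le (he.trans (v.map_sub_swap z z')).le
  obtain ⟨r, hr, -⟩ := Finset.not_subset.mp hinc.1
  rw [← he]
  exact le_valRadius_of_subset_discTrace (h.2 _ ⟨⟨r, hsub hr⟩, z, e, rfl⟩ hsub hsub')

lemma IsWedge.valDepth_le_val_sub
    (h : IsWedge v R (discTrace v R z δ) (discTrace v R z' δ') t)
    (hinc : IncompRel (· ⊆ ·) (discTrace v R z δ) (discTrace v R z' δ')) :
    valDepth v t ≤ v (z - z') := by
  obtain ⟨r, hr, -⟩ := Finset.not_subset.mp hinc.1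
  obtain ⟨r', hr', -⟩ := Finset.not_subset.mp hinc.2
  rw [← val_sub_eq_of_incompRel hinc hr hr']
  exact valDepth_le (h.1.2.1 hr) (h.1.2.2 hr')

lemma IsWedge.valDepth_eq_val_sub
    (h : IsWedge v R (discTrace v R z δ) (discTrace v R z' δ') t)
    (hinc : IncompRel (· ⊆ ·) (discTrace v R z δ) (discTrace v R z' δ')) :
    valDepth v t = v (z - z') :=
  (h.valDepth_le_val_sub hinc).antisymm
    ((h.val_sub_le_valRadius hinc).trans (valRadius_le_valDepth t z))

lemma IsWedge.valRadius_eq_valDepth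
    (h : IsWedge v R (discTrace v R z δ) (discTrace v R z' δ') t)
    (hinc : IncompRel (· ⊆ ·) (discTrace v R z δ) (discTrace v R z' δ')) :
    valRadius v t z = valDepth v t :=
  (valRadius_le_valDepth t z).antisymm
    ((h.valDepth_le_val_sub hinc).trans (h.val_sub_le_valRadius hinc))

lemma IsChild.incompRel (hs : IsChild v R s t) (hs' : IsChild v R s' t)
    (hc : IsDiscTrace v R ι s) (hc' : IsDiscTrace v R κ s') (hne : s ≠ s') :
    IncompRel (· ⊆ ·) s s' :=
  ⟨fun h => hs'.1.ne (hs.2 s' hc'.isDiscTrace_id (h.ssubset_of_ne hne) hs'.1.subset),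
    fun h => hs.1.ne (hs'.2 s hc.isDiscTrace_id (h.ssubset_of_ne hne.symm) hs.1.subset)⟩

lemma IsChild.isWedge (hs : IsChild v R s t) (hst' : s' ⊆ t) (ht : IsDiscTrace v R id t)
    (hinc : IncompRel (· ⊆ ·) s s') : IsWedge v R s s' t := by
  refine ⟨⟨ht, hs.1.subset, hst'⟩, fun u hu hsu hs'u => ?_⟩
  obtain ⟨r, hr, -⟩ := Finset.not_subset.mp hinc.1
  rcases ht.subset_or_subset hu (hs.1.subset hr) (hsu hr) with htu | hut
  · exact htu
  · have hssu : s ⊂ u := hsu.ssubset_of_ne (by rintro rfl; exact hinc.2 hs'u)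
    exact (hs.2 u hu hssu hut).superset

end DiscTraces

/-- The valuation of a `Setup`, bundled as Mathlib's `AddValuation`. -/
def Setup.addValuation (S : Setup K Kbar) : AddValuation Kbar (WithTop ℚ) :=
  AddValuation.of S.v ((S.v_top_iff 0).mpr rfl) S.v_one S.v_add S.v_mul

lemma Setup.exists_int_eq_val_sub (S : Setup K Kbar) {x y : K}
    (h : S.v (algebraMap K Kbar x - algebraMap K Kbar y) ≠ ⊤) :
    ∃ n : ℤ, S.v (algebraMap K Kbar x - algebraMap K Kbar y) = ((n : ℚ) : WithTop ℚ) := by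
  rw [← map_sub] at h ⊢
  refine S.v_base_int _ fun hxy => h ?_
  rw [hxy, map_zero, (S.v_top_iff 0).mpr rfl]

theorem wedge_of_rational_clusters_general {L Γ C : Type*} [Ring L] [AddCommGroup Γ]
    [LinearOrder Γ] [IsOrderedAddMonoid Γ] (v : AddValuation L (WithTop Γ)) (R : Finset L)
    (ι : C → L) :
    (∀ s s' t : Finset L, IsDiscTrace v R ι s → IsDiscTrace v R ι s' →
      IsWedge v R s s' t → s ⊂ t → s' ⊂ t →
      ∀ c c' a : C, IsBestCentre v ι s c → IsBestCentre v ι s' c' → IsBestCentre v ι t a →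
        valRadius v t (ι a) = v (ι c - ι c') ∧ valRadius v t (ι a) = valDepth v t) ∧
    (∀ t s s' : Finset L, IsDiscTrace v R id t →
      IsDiscTrace v R ι s → IsDiscTrace v R ι s' → s ≠ s' →
      IsChild v R s t → IsChild v R s' t →
      IsDiscTrace v R ι t ∧ (valDepth v t ≠ ⊤ ∧ ∃ c c' : C, valDepth v t = v (ι c - ι c')) ∧
        ∃ c : C, IsBestCentre v ι t c ∧ valRadius v t (ι c) = valDepth v t) := by
  constructor
  · intro s s' t hs hs' hwedge hst hst' c c' a hc hc' ha
    have hinc := hwedge.incompRel hs hs' hst hst'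
    obtain ⟨δ, rfl⟩ := hs.eq_discTrace_of_isBestCentre hc
    obtain ⟨δ', rfl⟩ := hs'.eq_discTrace_of_isBestCentre hc'
    have hrad := ha.valRadius_eq_valDepth (hwedge.valRadius_eq_valDepth hinc)
    exact ⟨hrad.trans (hwedge.valDepth_eq_val_sub hinc), hrad⟩
  · intro t s s' ht hs hs' hne hchild hchild'
    have hinc := hchild.incompRel hchild' hs hs' hne
    have hwedge := hchild.isWedge hchild'.1.subset ht hinc
    obtain ⟨-, c, δ, rfl⟩ := hs
    obtain ⟨-, c', δ', rfl⟩ := hs'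
    have hrad := hwedge.valRadius_eq_valDepth hinc
    have hdepth := hwedge.valDepth_eq_val_sub hinc
    exact ⟨ht.of_valRadius_eq_valDepth hrad,
      ⟨hdepth ▸ (val_sub_lt_of_incompRel hinc).ne_top, c, c', hdepth⟩,
      c, isBestCentre_of_valRadius_eq_valDepth hrad, hrad⟩

/-- **Clusters with two rational children.** If `s, s'` are rational clusters with
`s ⊊ s∧s' ⊋ s'` and rational centres `w, w'`, then `ρ_{s∧s'} = v(w − w') = d_{s∧s'}`.
In particular any cluster `t` with at least two children that are rational clusters
satisfies `d_t = ρ_t ∈ ℤ`, and `t` is itself a rational cluster. -/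
theorem wedge_of_rational_clusters
    (S : Setup K Kbar) (f : K[X]) (hsep : f.Separable) (hdeg : 1 ≤ f.natDegree) :
    (∀ s s' t : Finset Kbar,
      IsRationalCluster S f s → IsRationalCluster S f s' →
      IsCluster S f t → s ⊆ t → s' ⊆ t →
      (∀ u : Finset Kbar, IsCluster S f u → s ⊆ u → s' ⊆ u → t ⊆ u) →
      s ⊂ t → s' ⊂ t →
      ∀ w w' wt : K, IsRationalCentre S s w → IsRationalCentre S s' w' →
        IsRationalCentre S t wt →
        dminK S t wt = S.vK (w - w') ∧ dminK S t wt = depth S t) ∧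
    (∀ t c₁ c₂ : Finset Kbar, IsCluster S f t →
      IsRationalCluster S f c₁ → IsRationalCluster S f c₂ → c₁ ≠ c₂ →
      c₁ ⊂ t → c₂ ⊂ t →
      (∀ u : Finset Kbar, IsCluster S f u → c₁ ⊂ u → u ⊆ t → u = t) →
      (∀ u : Finset Kbar, IsCluster S f u → c₂ ⊂ u → u ⊆ t → u = t) →
      IsRationalCluster S f t ∧ (∃ n : ℤ, depth S t = (((n : ℚ)) : WithTop ℚ)) ∧
        ∃ w : K, IsRationalCentre S t w ∧ dminK S t w = depth S t) := by
  obtain ⟨hwedge, hchildren⟩ :=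
    wedge_of_rational_clusters_general S.addValuation (rootFinset f) (algebraMap K Kbar)
  refine ⟨fun s s' t hs hs' ht hst hst' hmin hss hss' w w' wt hw hw' hwt => ?_,
    fun t c₁ c₂ ht h₁ h₂ hne hlt₁ hlt₂ hmax₁ hmax₂ => ?_⟩
  · rw [Setup.vK, map_sub]
    exact hwedge s s' t hs hs' ⟨⟨ht, hst, hst'⟩, hmin⟩ hss hss' w w' wt hw hw' hwt
  · obtain ⟨hrat, ⟨hfin, w, w', hdepth⟩, hcentre⟩ :=
      hchildren t c₁ c₂ ht h₁ h₂ hne ⟨hlt₁, hmax₁⟩ ⟨hlt₂, hmax₂⟩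
    obtain ⟨n, hn⟩ := S.exists_int_eq_val_sub (hdepth ▸ hfin)
    exact ⟨hrat, ⟨n, hdepth.trans hn⟩, hcentre⟩

end ClusterPicture
end

section
/- Suppose f(0) ≠ 0 and NP(f) consists of a single edge L, of slope −ρ. Then f is NP-regular if and only if every proper cluster s ∈ Σ_f with |s| > |ρ|_p satisfies d_s = ρ. -/
open Polynomial
open scoped Classical

namespace ClusterPicture

variable {K Kbar : Type*} [Field K] [Field Kbar] [Algebra K Kbar]

/-! Every root of `f` has valuation at least `ρ`, so for `α` with `v(α) = ρ` the polynomial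
`c · f(α x)`, with `c` a suitable power of the uniformiser, is integral over the valuation ring of
`Kbar`; it is a unit times the product of the `x - r/α` over the roots `r` of `f`. Let `n` be the
denominator of `ρ` and choose `α` with `α ^ n = π ^ (n ρ)`. Since the values `v(a_m)` are integers,
only the coefficients with `n ∣ m` survive reduction, and the reduction is `h(x ^ n)`, where `h` is
the reduction of `f` along its edge. The multiplicity of `h(x ^ n)` at the class of `r/α` is the
number of roots of `f` in the open disc `v(x - r) > ρ`. It is also the `p`-part of `n` times the
multiplicity of `h` at the `n`-th power of that class. So `h` is separable exactly when each of
these open discs contains at most `max(1, |ρ|_p)` roots, this being the `p`-part of `n`. The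
clusters of depth greater than `ρ` are the ones contained in these open discs, and each disc itself
cuts out a cluster. -/

section Expand

variable {F : Type*} [Field F]

lemma rootMultiplicity_X_pow_sub_C_pow {n : ℕ} (hn : (n : F) ≠ 0) {x : F} (hx : x ≠ 0) :
    (X ^ n - C (x ^ n) : F[X]).rootMultiplicity x = 1 := by
  have hsep : (X ^ n - C (x ^ n) : F[X]).Separable :=
    separable_X_pow_sub_C _ hn (pow_ne_zero n hx)
  have hroot : (X ^ n - C (x ^ n) : F[X]).IsRoot x := by simp
  exact le_antisymm (rootMultiplicity_le_one_of_separable hsep x)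
    ((rootMultiplicity_pos hsep.ne_zero).mpr hroot)

lemma rootMultiplicity_expand_of_natCast_ne_zero {n : ℕ} (hn : (n : F) ≠ 0) (h : F[X]) {x : F}
    (hx : x ≠ 0) : (expand F n h).rootMultiplicity x = h.rootMultiplicity (x ^ n) := by
  rcases eq_or_ne h 0 with rfl | hh
  · simp
  obtain ⟨u, hu, hndvd⟩ := exists_eq_pow_rootMultiplicity_mul_and_not_dvd h hh (x ^ n)
  have hu_eval : (expand F n u).eval x ≠ 0 := by
    rwa [expand_eval, Ne, ← IsRoot.def, ← dvd_iff_isRoot]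
  have hexpand :
      expand F n h = (X ^ n - C (x ^ n)) ^ h.rootMultiplicity (x ^ n) * expand F n u := by
    conv_lhs => rw [hu]
    simp only [map_mul, map_pow, map_sub, expand_X, expand_C]
  have hn0 : n ≠ 0 := by
    rintro rfl
    exact hn Nat.cast_zero
  have hne : expand F n h ≠ 0 := (expand_ne_zero (Nat.pos_of_ne_zero hn0)).mpr hh
  rw [hexpand] at hne ⊢
  rw [rootMultiplicity_mul hne, ← count_roots, roots_pow, Multiset.count_nsmul, count_roots,
    rootMultiplicity_X_pow_sub_C_pow hn hx, rootMultiplicity_eq_zero hu_eval, mul_one, add_zero]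

lemma rootMultiplicity_expand_eq_ordProj_mul {p : ℕ} [Fact p.Prime] [CharP F p] {n : ℕ}
    (hn : n ≠ 0) (h : F[X]) {x : F} (hx : x ≠ 0) :
    (expand F n h).rootMultiplicity x = ordProj[p] n * h.rootMultiplicity (x ^ n) := by
  have hp : p.Prime := Fact.out
  have hcompl : ((ordCompl[p] n : ℕ) : F) ≠ 0 := by
    rw [Ne, CharP.cast_eq_zero_iff F p]
    exact Nat.not_dvd_ordCompl hp hn
  have : ExpChar F p := ExpChar.prime hp
  conv_lhs => rw [← Nat.ordProj_mul_ordCompl_eq_self n p]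
  rw [expand_mul, rootMultiplicity_expand_pow,
    rootMultiplicity_expand_of_natCast_ne_zero hcompl h (pow_ne_zero _ hx), ← pow_mul,
    Nat.ordProj_mul_ordCompl_eq_self]

lemma exists_map_pow_eq_of_isRoot_of_splits_expand {E : Type*} [Field E] [IsAlgClosed E]
    (i : F →+* E) {n : ℕ} (hn : n ≠ 0) {h : F[X]} (hh : h ≠ 0) (hs : (expand F n h).Splits)
    {t : E} (ht : (h.map i).IsRoot t) : ∃ x : F, i (x ^ n) = t := by
  have hn' : 0 < n := Nat.pos_of_ne_zero hn
  obtain ⟨x, rfl⟩ := IsAlgClosed.exists_pow_nat_eq t hn'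
  have hx : ((expand F n h).map i).IsRoot x := by
    rwa [map_expand, IsRoot.def, expand_eval]
  obtain ⟨y, rfl⟩ := hs.mem_range_of_isRoot ((expand_ne_zero hn').mpr hh) hx
  exact ⟨y, map_pow i y n⟩

lemma splits_of_splits_expand {n : ℕ} (hn : n ≠ 0) {h : F[X]} (hs : (expand F n h).Splits) :
    h.Splits := by
  rcases eq_or_ne h 0 with rfl | hh
  · exact Splits.zero
  refine Splits.of_splits_map (algebraMap F (AlgebraicClosure F)) (IsAlgClosed.splits _) ?_
  intro t ht
  obtain ⟨x, hx⟩ := exists_map_pow_eq_of_isRoot_of_splits_expand _ hn hh hs (mem_roots'.mp ht).2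
  exact ⟨x ^ n, hx⟩

lemma exists_pow_eq_of_isRoot_of_splits_expand {n : ℕ} (hn : n ≠ 0) {h : F[X]} (hh : h ≠ 0)
    (hs : (expand F n h).Splits) {t : F} (ht : h.IsRoot t) : ∃ x, x ^ n = t := by
  obtain ⟨x, hx⟩ := exists_map_pow_eq_of_isRoot_of_splits_expand
    (algebraMap F (AlgebraicClosure F)) hn hh hs ht.map
  exact ⟨x, FaithfulSMul.algebraMap_injective _ _ hx⟩

lemma separable_iff_rootMultiplicity_le_one_of_splits {h : F[X]} (hh : h ≠ 0) (hs : h.Splits) :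
    h.Separable ↔ ∀ t, h.rootMultiplicity t ≤ 1 := by
  simp_rw [← nodup_roots_iff_of_splits hh hs, Multiset.nodup_iff_count_le_one, count_roots]

lemma separable_iff_rootMultiplicity_expand_le {p : ℕ} [Fact p.Prime] [CharP F p] {n : ℕ}
    (hn : n ≠ 0) {h : F[X]} (h0 : h.coeff 0 ≠ 0) (hs : (expand F n h).Splits) :
    h.Separable ↔ ∀ x, (expand F n h).rootMultiplicity x ≤ ordProj[p] n := by
  have hh : h ≠ 0 := by
    rintro rfl
    exact h0 (coeff_zero 0)
  have hproj : 0 < ordProj[p] n := Nat.ordProj_pos n p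
  rw [separable_iff_rootMultiplicity_le_one_of_splits hh (splits_of_splits_expand hn hs)]
  constructor
  · intro hle x
    rcases eq_or_ne x 0 with rfl | hx
    · have hroot : ¬ (expand F n h).IsRoot 0 := by
        rwa [IsRoot.def, expand_eval, zero_pow hn, ← coeff_zero_eq_eval_zero]
      rw [rootMultiplicity_eq_zero hroot]
      exact hproj.le
    · rw [rootMultiplicity_expand_eq_ordProj_mul hn h hx]
      exact mul_le_of_le_one_right' (hle _)
  · intro hle t
    by_cases ht : h.IsRoot t
    · obtain ⟨x, rfl⟩ := exists_pow_eq_of_isRoot_of_splits_expand hn hh hs ht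
      have hx : x ≠ 0 := by
        rintro rfl
        rw [zero_pow hn, IsRoot.def, ← coeff_zero_eq_eval_zero] at ht
        exact h0 ht
      have hmul := hle x
      rw [rootMultiplicity_expand_eq_ordProj_mul hn h hx] at hmul
      exact Nat.le_of_mul_le_mul_left (by rwa [mul_one]) hproj
    · rw [rootMultiplicity_eq_zero ht]
      exact zero_le_one

lemma rootMultiplicity_C_mul_prod_X_sub_C {ι : Type*} (R : Finset ι) (y : ι → F) {u : F}
    (hu : u ≠ 0) (x : F) :
    (C u * ∏ r ∈ R, (X - C (y r))).rootMultiplicity x = (R.filter fun r => y r = x).card := by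
  have hroots : (∏ r ∈ R, (X - C (y r))).roots = R.val.map y := by
    rw [← roots_multiset_prod_X_sub_C (R.val.map y), Multiset.map_map]
    rfl
  rw [← count_roots, roots_C_mul _ hu, hroots, Multiset.count_map]
  simp only [eq_comm]
  rfl

lemma splits_C_mul_prod_X_sub_C {ι : Type*} (R : Finset ι) (y : ι → F) (u : F) :
    (C u * ∏ r ∈ R, (X - C (y r))).Splits :=
  (Splits.C u).mul (Splits.prod fun r _ => Splits.X_sub_C (y r))

end Expand

lemma forall_card_filter_eq_le_iff {ι β : Type*} (R : Finset ι) (g : ι → β) (N : ℕ) :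
    (∀ x, (R.filter fun r => g r = x).card ≤ N) ↔
      ∀ r ∈ R, (R.filter fun r' => g r' = g r).card ≤ N := by
  refine ⟨fun h r _ => h (g r), fun h x => ?_⟩
  rcases (R.filter fun r => g r = x).eq_empty_or_nonempty with hempty | ⟨r, hr⟩
  · rw [hempty, Finset.card_empty]
    exact N.zero_le
  · obtain ⟨hrR, rfl⟩ := Finset.mem_filter.mp hr
    exact h r hrR

lemma max_one_padicNorm_eq_ordProj_den (p : ℕ) [Fact p.Prime] (ρ : ℚ) :
    max 1 (padicNorm p ρ) = ((ordProj[p] ρ.den : ℕ) : ℚ) := by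
  have hp : p.Prime := Fact.out
  have hden0 : (ρ.den : ℚ) ≠ 0 := Nat.cast_ne_zero.mpr ρ.den_nz
  have hnorm_den : padicNorm p ρ.den = ((ordProj[p] ρ.den : ℕ) : ℚ)⁻¹ := by
    rw [padicNorm.eq_zpow_of_nonzero hden0, padicValRat.of_nat, Nat.factorization_def _ hp]
    simp
  have hnorm : padicNorm p ρ = padicNorm p ρ.num * ((ordProj[p] ρ.den : ℕ) : ℚ) := by
    conv_lhs => rw [← Rat.num_div_den ρ]
    rw [padicNorm.div, hnorm_den, div_inv_eq_mul]
  by_cases hdvd : p ∣ ρ.den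
  · have hnum : ¬ (p : ℤ) ∣ ρ.num := fun h =>
      Nat.not_coprime_of_dvd_of_dvd hp.one_lt (Int.natCast_dvd.mp h) hdvd ρ.reduced
    rw [hnorm, (padicNorm.int_eq_one_iff ρ.num).mpr hnum, one_mul]
    exact max_eq_right (by exact_mod_cast Nat.ordProj_pos ρ.den p)
  · rw [hnorm, Nat.factorization_eq_zero_of_not_dvd hdvd, pow_zero, Nat.cast_one, mul_one]
    exact max_eq_left (padicNorm.of_int ρ.num)

lemma one_lt_and_padicNorm_lt_iff_ordProj_den_lt (p : ℕ) [Fact p.Prime] (ρ : ℚ) (m : ℕ) :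
    1 < m ∧ padicNorm p ρ < m ↔ ordProj[p] ρ.den < m := by
  rw [← Nat.cast_lt (α := ℚ) (m := ordProj[p] ρ.den), ← max_one_padicNorm_eq_ordProj_den,
    max_lt_iff, Nat.one_lt_cast]

lemma den_dvd_of_natCast_mul_eq_intCast {ρ : ℚ} {m : ℕ} {z : ℤ} (h : m * ρ = z) : ρ.den ∣ m := by
  rcases eq_or_ne m 0 with rfl | hm
  · exact dvd_zero _
  have hρ : ρ = Rat.divInt z m := by
    rw [Rat.divInt_eq_div, ← h]
    field_simp
    simp
  rw [← Int.natCast_dvd_natCast, hρ]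
  exact Rat.den_dvd z m

section AddValuation

variable {A : Type*} [CommRing A] (v : AddValuation A (WithTop ℚ))

lemma addValuation_mul_eq_coe {x y : A} {a b : ℚ} (hx : v x = a) (hy : v y = b) :
    v (x * y) = ((a + b : ℚ) : WithTop ℚ) := by
  rw [v.map_mul, hx, hy, WithTop.coe_add]

lemma addValuation_pow_eq_coe {x : A} {a : ℚ} (hx : v x = a) (n : ℕ) :
    v (x ^ n) = ((n * a : ℚ) : WithTop ℚ) := by
  rw [v.map_pow, hx, ← WithTop.coe_nsmul, nsmul_eq_mul]

lemma addValuation_zpow_eq_coe {F : Type*} [Field F] (v : AddValuation F (WithTop ℚ)) {x : F}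
    {a : ℚ} (hx : v x = a) (n : ℤ) : v (x ^ n) = ((n * a : ℚ) : WithTop ℚ) := by
  cases n with
  | ofNat m =>
    rw [Int.ofNat_eq_natCast, zpow_natCast, addValuation_pow_eq_coe v hx, Int.cast_natCast]
  | negSucc m =>
    rw [zpow_negSucc, v.map_inv, addValuation_pow_eq_coe v hx, Int.cast_negSucc, neg_mul]
    rfl

lemma addValuation_eq_of_pow_eq {x : A} {n : ℕ} (hn : n ≠ 0) {a : ℚ}
    (hx : v (x ^ n) = ((n * a : ℚ) : WithTop ℚ)) : v x = a := by
  rw [v.map_pow] at hx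
  cases hvx : v x with
  | top =>
    obtain ⟨k, rfl⟩ := Nat.exists_eq_succ_of_ne_zero hn
    rw [hvx, succ_nsmul, add_top] at hx
    exact absurd hx.symm WithTop.coe_ne_top
  | coe b =>
    rw [hvx, ← WithTop.coe_nsmul, WithTop.coe_inj, nsmul_eq_mul] at hx
    rw [mul_left_cancel₀ (Nat.cast_ne_zero.mpr hn) hx]

lemma le_addValuation_of_isRoot {g : A[X]} {q ρ : ℚ}
    (hle : ∀ m : ℕ, ((q - m * ρ : ℚ) : WithTop ℚ) ≤ v (g.coeff m))
    (hlead : v g.leadingCoeff = ((q - g.natDegree * ρ : ℚ) : WithTop ℚ))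
    {r : A} (hr : g.IsRoot r) : (ρ : WithTop ℚ) ≤ v r := by
  by_contra! hlt
  obtain ⟨t, ht⟩ := WithTop.ne_top_iff_exists.mp hlt.ne_top
  rw [← ht, WithTop.coe_lt_coe] at hlt
  have hterm (m : ℕ) : v (g.coeff m * r ^ m) = v (g.coeff m) + ((m * t : ℚ) : WithTop ℚ) := by
    rw [v.map_mul, addValuation_pow_eq_coe v ht.symm]
  have htop : v (g.leadingCoeff * r ^ g.natDegree) =
      ((q - g.natDegree * ρ + g.natDegree * t : ℚ) : WithTop ℚ) := by
    rw [leadingCoeff, hterm, ← leadingCoeff, hlead, ← WithTop.coe_add]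
  have hlower : v (g.leadingCoeff * r ^ g.natDegree) <
      v (∑ m ∈ Finset.range g.natDegree, g.coeff m * r ^ m) := by
    rw [htop]
    refine v.map_lt_sum (WithTop.coe_ne_top) fun m hm => ?_
    have hm' : (m : ℚ) < g.natDegree := Nat.cast_lt.mpr (Finset.mem_range.mp hm)
    rw [hterm]
    refine lt_of_lt_of_le ?_ (add_le_add_left (hle m) _)
    rw [← WithTop.coe_add, WithTop.coe_lt_coe]
    linarith [mul_pos (sub_pos.mpr hm') (sub_pos.mpr hlt)]
  have hsum : ∑ m ∈ Finset.range g.natDegree, g.coeff m * r ^ m =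
      -(g.leadingCoeff * r ^ g.natDegree) := by
    rw [eq_neg_iff_add_eq_zero, leadingCoeff, ← Finset.sum_range_succ, ← eval_eq_sum_range, hr]
  rw [hsum, v.map_neg] at hlower
  exact lt_irrefl _ hlower

end AddValuation

section NewtonPolygon

variable {S : Setup K Kbar} {f : K[X]} {s t : ℕ} {i : Fin (s + 1) → ℕ} {c : Fin (s + 1) → ℚ}

lemma IsNPVertices.apply_succ_eq (h : IsNPVertices S f s i c) (j : Fin s) :
    c j.succ = c j.castSucc + NPslope i c j * ((i j.succ : ℚ) - i j.castSucc) := by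
  have hij : (i j.castSucc : ℚ) < i j.succ := Nat.cast_lt.mpr (h.mono j.castSucc_lt_succ)
  rw [NPslope, div_mul_cancel₀ _ (sub_pos.mpr hij).ne', add_sub_cancel]

lemma IsNPVertices.edge_le_vK_coeff (h : IsNPVertices S f s i c) (j : Fin s) (m : ℕ) :
    ((c j.castSucc + NPslope i c j * ((m : ℚ) - i j.castSucc) : ℚ) : WithTop ℚ) ≤
      S.vK (f.coeff m) := by
  have hij : (i j.castSucc : ℚ) < i j.succ := Nat.cast_lt.mpr (h.mono j.castSucc_lt_succ)
  cases hq : S.vK (f.coeff m) with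
  | top => exact le_top
  | coe q =>
    have hsupport := h.support j m q hq
    rw [WithTop.coe_le_coe, NPslope, div_mul_eq_mul_div, ← le_sub_iff_add_le',
      div_le_iff₀ (sub_pos.mpr hij)]
    exact hsupport

lemma IsNPVertices.edge_le (h : IsNPVertices S f s i c) {i' : Fin (t + 1) → ℕ}
    {c' : Fin (t + 1) → ℚ} (h' : IsNPVertices S f t i' c') (j : Fin s) (k : Fin (t + 1)) :
    c j.castSucc + NPslope i c j * ((i' k : ℚ) - i j.castSucc) ≤ c' k := by
  have hle := h.edge_le_vK_coeff j (i' k)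
  rwa [h'.vert, WithTop.coe_le_coe] at hle

lemma IsNPVertices.apply_eq_of_index_eq (h : IsNPVertices S f s i c) {i' : Fin (t + 1) → ℕ}
    {c' : Fin (t + 1) → ℚ} (h' : IsNPVertices S f t i' c') {j : Fin (s + 1)} {k : Fin (t + 1)}
    (hjk : i j = i' k) : c j = c' k := by
  rw [← WithTop.coe_inj, ← h.vert, ← h'.vert, hjk]

section FirstAndLastSlope

variable {i : Fin (s + 1 + 1) → ℕ} {c : Fin (s + 1 + 1) → ℚ}
  {i' : Fin (t + 1 + 1) → ℕ} {c' : Fin (t + 1 + 1) → ℚ}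

lemma IsNPVertices.NPslope_zero_le (h : IsNPVertices S f (s + 1) i c)
    (h' : IsNPVertices S f (t + 1) i' c') : NPslope i c 0 ≤ NPslope i' c' 0 := by
  have hi : i 0 = i' 0 := h.first.trans h'.first.symm
  have hc : c 0 = c' 0 := h.apply_eq_of_index_eq h' hi
  have hle := h.edge_le h' 0 (Fin.succ 0)
  have hlt : (i' 0 : ℚ) < i' (Fin.succ 0) := Nat.cast_lt.mpr (h'.mono (Fin.succ_pos 0))
  rw [h'.apply_succ_eq 0, Fin.castSucc_zero, Fin.castSucc_zero, hi, hc] at hle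
  exact le_of_mul_le_mul_right (le_of_add_le_add_left hle) (sub_pos.mpr hlt)

lemma IsNPVertices.NPslope_last_le (h : IsNPVertices S f (s + 1) i c)
    (h' : IsNPVertices S f (t + 1) i' c') :
    NPslope i' c' (Fin.last t) ≤ NPslope i c (Fin.last s) := by
  have hi : i (Fin.last s).succ = i' (Fin.last t).succ := by
    rw [Fin.succ_last, Fin.succ_last, h.last, h'.last]
  have hc : c (Fin.last s).succ = c' (Fin.last t).succ := h.apply_eq_of_index_eq h' hi
  have hle := h.edge_le h' (Fin.last s) (Fin.last t).castSucc
  have hlt : (i' (Fin.last t).castSucc : ℚ) < i' (Fin.last t).succ :=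
    Nat.cast_lt.mpr (h'.mono (Fin.castSucc_lt_succ))
  rw [h.apply_succ_eq, h'.apply_succ_eq, hi] at hc
  refine le_of_mul_le_mul_right ?_ (sub_pos.mpr hlt)
  linarith

end FirstAndLastSlope

lemma IsNPVertices.eq_one_of_single_edge {i : Fin 2 → ℕ} {c : Fin 2 → ℚ}
    (h : IsNPVertices S f 1 i c) {i' : Fin (t + 1) → ℕ} {c' : Fin (t + 1) → ℚ}
    (h' : IsNPVertices S f t i' c') (ht : 0 < t) : t = 1 := by
  obtain ⟨t, rfl⟩ := Nat.exists_eq_succ_of_ne_zero ht.ne'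
  have hslopes : NPslope i' c' (Fin.last t) ≤ NPslope i' c' 0 :=
    (h.NPslope_last_le h').trans (h.NPslope_zero_le h')
  have hlast : Fin.last t ≤ 0 := h'.slope_mono.le_iff_le.mp hslopes
  exact congrArg Nat.succ (Nat.le_zero.mp hlast)

lemma IsNPVertices.eq_of_single_edge {i i' : Fin 2 → ℕ} {c c' : Fin 2 → ℚ}
    (h : IsNPVertices S f 1 i c) (h' : IsNPVertices S f 1 i' c') : i' = i ∧ c' = c := by
  have hi : i' = i := by
    ext j
    fin_cases j
    exacts [h'.first.trans h.first.symm, h'.last.trans h.last.symm]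
  exact ⟨hi, funext fun j => h'.apply_eq_of_index_eq h (congrFun hi j)⟩

lemma npRegular_iff_of_single_edge {i : Fin 2 → ℕ} {c : Fin 2 → ℚ} (π : K)
    (h : IsNPVertices S f 1 i c) {q : ℤ} (hq : (q : ℚ) = c 0) :
    NPRegular S π f ↔
      (redEdge S π f (i 0) (i 1) q (NPslope i c 0).num (NPslope i c 0).den).Separable := by
  constructor
  · intro hreg
    exact hreg 1 i c h 0 q _ _ hq rfl (Rat.den_mul_eq_num _).symm
  · intro hred t i' c' h' j q' nρ n hq' hn hnρ
    obtain rfl := h.eq_one_of_single_edge h' j.pos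
    obtain ⟨rfl, rfl⟩ := h.eq_of_single_edge h'
    obtain rfl := Subsingleton.elim j 0
    obtain rfl : q' = q := Int.cast_injective (hq'.trans hq.symm)
    obtain rfl : nρ = (NPslope i' c' 0).num := by
      rw [hn, Rat.den_mul_eq_num] at hnρ
      exact Int.cast_injective hnρ
    rw [hn]
    exact hred

end NewtonPolygon

section ValuationRing

/-- The valuation of a `Setup`, bundled as an `AddValuation` so that the library's lemmas apply. -/
def Setup.addVal (S : Setup K Kbar) : AddValuation Kbar (WithTop ℚ) :=
  AddValuation.of S.v ((S.v_top_iff 0).mpr rfl) S.v_one S.v_add S.v_mul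

variable {S : Setup K Kbar}

lemma Setup.addVal_apply (x : Kbar) : S.addVal x = S.v x := rfl

lemma isUnit_intRing {x : intRing S} (hx : S.v x = 0) : IsUnit x := by
  have hx0 : (x : Kbar) ≠ 0 := by
    rw [Ne, ← S.v_top_iff, hx]
    exact WithTop.zero_ne_top
  have hinv : (0 : WithTop ℚ) ≤ S.v (x : Kbar)⁻¹ := by
    rw [← S.addVal_apply, S.addVal.map_inv, S.addVal_apply, hx, neg_zero]
  exact IsUnit.of_mul_eq_one ⟨(x : Kbar)⁻¹, hinv⟩ (Subtype.ext (mul_inv_cancel₀ hx0))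

instance maxIdeal_isMaximal : (maxIdeal S).IsMaximal := by
  rw [Ideal.isMaximal_iff]
  constructor
  · intro hone
    have hpos : (0 : WithTop ℚ) < S.v 1 := hone
    exact hpos.ne' S.v_one
  · intro J x _ hx hxJ
    have hval : S.v x = 0 := le_antisymm (not_lt.mp hx) x.2
    rw [← Ideal.eq_top_iff_one]
    exact Ideal.eq_top_of_isUnit_mem J hxJ (isUnit_intRing hval)

noncomputable instance : Field (Residue S) := Ideal.Quotient.field _

lemma mk_maxIdeal_eq_zero_iff {x : intRing S} :
    Ideal.Quotient.mk (maxIdeal S) x = 0 ↔ 0 < S.v x :=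
  Ideal.Quotient.eq_zero_iff_mem

lemma mk_maxIdeal_eq_mk_iff {x y : intRing S} :
    Ideal.Quotient.mk (maxIdeal S) x = Ideal.Quotient.mk (maxIdeal S) y ↔
      0 < S.v ((x : Kbar) - y) :=
  Ideal.Quotient.eq

lemma red_coe (x : intRing S) : red S x = Ideal.Quotient.mk (maxIdeal S) x := dif_pos x.2

lemma charP_residue {p : ℕ} (hp : p.Prime) (hres : 0 < S.vK (p : K)) : CharP (Residue S) p := by
  rw [CharP.charP_iff_prime_eq_zero hp, ← map_natCast (Ideal.Quotient.mk (maxIdeal S)),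
    mk_maxIdeal_eq_zero_iff]
  rwa [Setup.vK, map_natCast] at hres

end ValuationRing

section Segment

/-- The Newton polygon of `f` is a single segment starting at `(0, q)`, with slope `-ρ`: both
endpoints lie on the line `m ↦ q - m ρ`, and no coefficient lies below it. -/
structure IsNPSegment (S : Setup K Kbar) (f : K[X]) (q ρ : ℚ) : Prop where
  coeff_zero : S.vK (f.coeff 0) = q
  leadingCoeff : S.vK f.leadingCoeff = ((q - f.natDegree * ρ : ℚ) : WithTop ℚ)
  le_coeff : ∀ m : ℕ, ((q - m * ρ : ℚ) : WithTop ℚ) ≤ S.vK (f.coeff m)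

variable {S : Setup K Kbar} {f : K[X]} {q ρ : ℚ}

lemma IsNPVertices.isNPSegment {i : Fin 2 → ℕ} {c : Fin 2 → ℚ} (h : IsNPVertices S f 1 i c)
    (hi : i 0 = 0) : IsNPSegment S f (c 0) (-NPslope i c 0) where
  coeff_zero := by rw [← hi, h.vert]
  leadingCoeff := by
    have hlast : i (Fin.succ 0) = f.natDegree := h.last
    rw [Polynomial.leadingCoeff, ← hlast, h.vert, h.apply_succ_eq, Fin.castSucc_zero, hi]
    congr 1
    push_cast
    ring
  le_coeff m := by
    have hle := h.edge_le_vK_coeff 0 m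
    rw [Fin.castSucc_zero, hi] at hle
    convert hle using 2
    push_cast
    ring

lemma IsNPSegment.coeff_zero_ne_zero (h : IsNPSegment S f q ρ) : f.coeff 0 ≠ 0 := by
  intro h0
  have htop : S.vK (f.coeff 0) = ⊤ := by rw [h0, Setup.vK, map_zero, S.v_top_iff]
  exact WithTop.coe_ne_top (h.coeff_zero.symm.trans htop)

lemma IsNPSegment.exists_intCast_eq (h : IsNPSegment S f q ρ) : ∃ z : ℤ, (z : ℚ) = q := by
  obtain ⟨z, hz⟩ := S.v_base_int _ h.coeff_zero_ne_zero
  exact ⟨z, WithTop.coe_injective (hz.symm.trans h.coeff_zero)⟩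

lemma isRoot_map_of_mem_rootFinset {r : Kbar} (hr : r ∈ rootFinset f) :
    (f.map (algebraMap K Kbar)).IsRoot r :=
  isRoot_of_mem_roots (Multiset.mem_toFinset.mp hr)

lemma IsNPSegment.le_v_of_mem_rootFinset (h : IsNPSegment S f q ρ) {r : Kbar}
    (hr : r ∈ rootFinset f) : (ρ : WithTop ℚ) ≤ S.v r := by
  refine le_addValuation_of_isRoot S.addVal (g := f.map (algebraMap K Kbar)) (q := q)
    (fun m => ?_) ?_ (isRoot_map_of_mem_rootFinset hr)
  · rw [coeff_map]
    exact h.le_coeff m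
  · rw [leadingCoeff_map, natDegree_map]
    exact h.leadingCoeff

lemma IsNPSegment.le_v_sub (h : IsNPSegment S f q ρ) {r r' : Kbar} (hr : r ∈ rootFinset f)
    (hr' : r' ∈ rootFinset f) : (ρ : WithTop ℚ) ≤ S.v (r - r') :=
  S.addVal.map_le_sub (h.le_v_of_mem_rootFinset hr) (h.le_v_of_mem_rootFinset hr')

lemma map_eq_C_mul_prod_rootFinset [IsAlgClosed Kbar] (hsep : f.Separable) :
    f.map (algebraMap K Kbar) =
      C (algebraMap K Kbar f.leadingCoeff) * ∏ r ∈ rootFinset f, (X - C r) := by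
  have hroots : (f.map (algebraMap K Kbar)).roots = (rootFinset f).val :=
    (Multiset.dedup_eq_self.mpr (nodup_roots hsep.map)).symm
  have hfactor := (IsAlgClosed.splits (f.map (algebraMap K Kbar))).eq_prod_roots
  rw [hroots, leadingCoeff_map] at hfactor
  exact hfactor

lemma card_rootFinset [IsAlgClosed Kbar] (hsep : f.Separable) :
    (rootFinset f : Finset Kbar).card = f.natDegree := by
  rw [← natDegree_map (algebraMap K Kbar),
    (IsAlgClosed.splits (f.map (algebraMap K Kbar))).natDegree_eq_card_roots, rootFinset,
    Multiset.toFinset_card_of_nodup (nodup_roots hsep.map)]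

end Segment

section Rescale

/-- The polynomial `c · f(α x)` over the algebraic closure. With `v(α)` the common valuation of
the roots of `f` and a suitable `c` it is integral and has nonzero reduction. -/
noncomputable def rescale (f : K[X]) (c α : Kbar) : Kbar[X] :=
  C c * (f.map (algebraMap K Kbar)).comp (C α * X)

lemma coeff_rescale (f : K[X]) (c α : Kbar) (m : ℕ) :
    (rescale f c α).coeff m = c * (algebraMap K Kbar (f.coeff m) * α ^ m) := by
  rw [rescale, coeff_C_mul, comp_C_mul_X_coeff, coeff_map]

lemma rescale_eq_C_mul_prod [IsAlgClosed Kbar] {f : K[X]} (hsep : f.Separable) (c : Kbar)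
    {α : Kbar} {y : Kbar → Kbar} (hy : ∀ r ∈ rootFinset f, α * y r = r) :
    rescale f c α = C (c * algebraMap K Kbar f.leadingCoeff * α ^ f.natDegree) *
      ∏ r ∈ rootFinset f, (X - C (y r)) := by
  have hlinear : ∀ r ∈ rootFinset f, (X - C r).comp (C α * X) = C α * (X - C (y r)) := by
    intro r hr
    rw [sub_comp, X_comp, C_comp, mul_sub, ← C_mul, hy r hr]
  rw [rescale, map_eq_C_mul_prod_rootFinset hsep, mul_comp, C_comp, prod_comp,
    Finset.prod_congr rfl hlinear, Finset.prod_mul_distrib, Finset.prod_const,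
    card_rootFinset hsep, ← mul_assoc, ← mul_assoc, C_mul, C_mul, C_pow]

variable {S : Setup K Kbar} {f : K[X]} {q ρ : ℚ}

lemma IsNPSegment.exists_integral_roots (h : IsNPSegment S f q ρ) {α : Kbar}
    (hα : S.v α = ρ) :
    ∃ y : Kbar → intRing S, ∀ r ∈ rootFinset f, α * y r = r := by
  have hα0 : α ≠ 0 := by
    rw [Ne, ← S.v_top_iff, hα]
    exact WithTop.coe_ne_top
  have hexists : ∀ r ∈ rootFinset f, ∃ x : intRing S, α * x = r := by
    intro r hr
    have hle : ρ + 0 ≤ ρ + S.v (r / α) := by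
      rw [add_zero, ← hα, ← S.v_mul, mul_div_cancel₀ _ hα0, hα]
      exact h.le_v_of_mem_rootFinset hr
    have hint : 0 ≤ S.v (r / α) := WithTop.le_of_add_le_add_left WithTop.coe_ne_top hle
    exact ⟨⟨r / α, hint⟩, mul_div_cancel₀ _ hα0⟩
  choose! y hy using hexists
  exact ⟨y, hy⟩

lemma IsNPSegment.exists_integral_factorization (h : IsNPSegment S f q ρ) (hsep : f.Separable)
    {c α : Kbar} (hc : S.v c = ((-q : ℚ) : WithTop ℚ)) (hα : S.v α = ρ) {y : Kbar → intRing S}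
    (hy : ∀ r ∈ rootFinset f, α * y r = r) :
    ∃ u : intRing S, IsUnit u ∧
      (C u * ∏ r ∈ rootFinset f, (X - C (y r))).map (intRing S).subtype = rescale f c α := by
  have := S.algClosed
  have hval : S.v (c * algebraMap K Kbar f.leadingCoeff * α ^ f.natDegree) = 0 := by
    have hmul := addValuation_mul_eq_coe S.addVal
      (addValuation_mul_eq_coe S.addVal hc h.leadingCoeff)
      (addValuation_pow_eq_coe S.addVal hα f.natDegree)
    rw [← S.addVal_apply, hmul, ← WithTop.coe_zero]
    congr 1
    ring
  refine ⟨⟨_, hval.ge⟩, isUnit_intRing hval, ?_⟩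
  rw [rescale_eq_C_mul_prod hsep c hy]
  simp only [Polynomial.map_mul, Polynomial.map_prod, Polynomial.map_sub, map_C, map_X,
    Subring.subtype_apply]

end Rescale

section Reduction

variable {S : Setup K Kbar} {f : K[X]} {π : K}

lemma red_zero : red S 0 = 0 := (red_coe (0 : intRing S)).trans (map_zero _)

lemma red_eq_zero_iff {x : Kbar} (hx : 0 ≤ S.v x) : red S x = 0 ↔ 0 < S.v x := by
  lift x to intRing S using hx
  rw [red_coe, mk_maxIdeal_eq_zero_iff]

lemma coeff_map_mk (G : (intRing S)[X]) (m : ℕ) :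
    (G.map (Ideal.Quotient.mk (maxIdeal S))).coeff m =
      red S ((G.map (intRing S).subtype).coeff m) := by
  rw [coeff_map, coeff_map, Subring.subtype_apply, red_coe]

lemma coeff_redEdge_natDegree (i : ℕ) (q nρ : ℤ) {n : ℕ} (hn : n ≠ 0) (j : ℕ) :
    (redEdge S π f i f.natDegree q nρ n).coeff j =
      red S (algebraMap K Kbar (f.coeff (n * j + i)) *
        (algebraMap K Kbar π) ^ (-(q + j * nρ))) := by
  rw [redEdge, finsetSum_coeff]
  simp only [coeff_C_mul_X_pow, Finset.sum_ite_eq, Finset.mem_range]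
  split_ifs with hj
  · rfl
  · have hmul : f.natDegree - i < j * n :=
      (Nat.div_lt_iff_lt_mul (Nat.pos_of_ne_zero hn)).mp (Nat.succ_le_iff.mp (not_lt.mp hj))
    have hdeg : f.natDegree < n * j + i := by
      rw [mul_comm n]
      lia
    rw [coeff_eq_zero_of_natDegree_lt hdeg, map_zero, zero_mul, red_zero]

variable {q : ℤ} {ρ : ℚ}

lemma v_algebraMap_zpow (hπ : S.vK π = (1 : ℚ)) (z : ℤ) :
    S.v (algebraMap K Kbar π ^ z) = ((z : ℚ) : WithTop ℚ) := by
  rw [← S.addVal_apply, addValuation_zpow_eq_coe S.addVal hπ, mul_one]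

lemma IsNPSegment.coeff_zero_redEdge_ne_zero (h : IsNPSegment S f q ρ) (hπ : S.vK π = (1 : ℚ))
    (nρ : ℤ) {n : ℕ} (hn : n ≠ 0) :
    (redEdge S π f 0 f.natDegree q nρ n).coeff 0 ≠ 0 := by
  have hval := addValuation_mul_eq_coe S.addVal h.coeff_zero
    (v_algebraMap_zpow hπ (-q))
  rw [S.addVal_apply, Int.cast_neg, add_neg_cancel, WithTop.coe_zero] at hval
  rw [coeff_redEdge_natDegree 0 q nρ hn, Nat.cast_zero, zero_mul, add_zero, mul_zero, add_zero,
    Ne, red_eq_zero_iff hval.ge, hval]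
  exact lt_irrefl 0

lemma IsNPSegment.v_coeff_rescale_pos (h : IsNPSegment S f q ρ) {c α : Kbar}
    (hc : S.v c = ((-q : ℚ) : WithTop ℚ)) (hα : S.v α = ρ) {m : ℕ} (hm : ¬ ρ.den ∣ m) :
    0 < S.v ((rescale f c α).coeff m) := by
  rw [coeff_rescale]
  rcases eq_or_ne (f.coeff m) 0 with h0 | h0
  · rw [h0, map_zero, zero_mul, mul_zero, (S.v_top_iff 0).mpr rfl]
    exact zero_lt_top'
  obtain ⟨z, hz⟩ := S.v_base_int _ h0
  have hle : q - m * ρ ≤ z := by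
    rw [← WithTop.coe_le_coe, ← hz]
    exact h.le_coeff m
  have hne : q - m * ρ ≠ z := by
    intro heq
    refine hm (den_dvd_of_natCast_mul_eq_intCast (z := q - z) ?_)
    push_cast
    linarith
  have hval := addValuation_mul_eq_coe S.addVal hc
    (addValuation_mul_eq_coe S.addVal hz (addValuation_pow_eq_coe S.addVal hα m))
  rw [← S.addVal_apply, hval, ← WithTop.coe_zero, WithTop.coe_lt_coe]
  linarith [lt_of_le_of_ne hle hne]

lemma v_eq_of_pow_den_eq (hπ : S.vK π = (1 : ℚ)) {α : Kbar}
    (hα : α ^ ρ.den = algebraMap K Kbar π ^ ρ.num) : S.v α = ρ := by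
  refine addValuation_eq_of_pow_eq S.addVal ρ.den_nz ?_
  rw [hα, S.addVal_apply, v_algebraMap_zpow hπ, Rat.den_mul_eq_num]

lemma IsNPSegment.expand_redEdge_eq_map_mk (h : IsNPSegment S f q ρ)
    (hπ : S.vK π = (1 : ℚ)) {α : Kbar} (hα : α ^ ρ.den = algebraMap K Kbar π ^ ρ.num)
    {G : (intRing S)[X]}
    (hG : G.map (intRing S).subtype = rescale f (algebraMap K Kbar π ^ (-q)) α) :
    expand (Residue S) ρ.den (redEdge S π f 0 f.natDegree q (-ρ).num (-ρ).den) =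
      G.map (Ideal.Quotient.mk (maxIdeal S)) := by
  have hP0 : algebraMap K Kbar π ≠ 0 := by
    rw [Ne, ← S.v_top_iff]
    exact fun htop => WithTop.coe_ne_top (hπ.symm.trans htop)
  have hc : S.v (algebraMap K Kbar π ^ (-q)) = ((-q : ℚ) : WithTop ℚ) := by
    rw [v_algebraMap_zpow hπ, Int.cast_neg]
  have hvα := v_eq_of_pow_den_eq hπ hα
  ext m
  rw [coeff_expand ρ.den_pos, coeff_map_mk, hG]
  split_ifs with hm
  · obtain ⟨j, rfl⟩ := hm
    rw [Nat.mul_div_cancel_left j ρ.den_pos, coeff_redEdge_natDegree _ _ _ (-ρ).den_nz,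
      Rat.den_neg_eq_den, Rat.num_neg_eq_neg_num, add_zero, coeff_rescale, pow_mul, hα,
      ← zpow_natCast, ← zpow_mul, mul_left_comm, ← zpow_add₀ hP0]
    congr 3
    ring
  · have hpos := h.v_coeff_rescale_pos hc hvα hm
    exact ((red_eq_zero_iff hpos.le).mpr hpos).symm

end Reduction

section Cluster

/-- The roots of `f` in the open disc `{x | v (x - r) > ρ}`. -/
noncomputable def openDiscRoots (S : Setup K Kbar) (f : K[X]) (ρ : ℚ) (r : Kbar) : Finset Kbar :=
  (rootFinset f).filter fun r' => (ρ : WithTop ℚ) < S.v (r' - r)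

variable {S : Setup K Kbar} {f : K[X]} {s : Finset Kbar} {q ρ : ℚ} {r : Kbar}

lemma mem_openDiscRoots {x : Kbar} :
    x ∈ openDiscRoots S f ρ r ↔ x ∈ rootFinset f ∧ (ρ : WithTop ℚ) < S.v (x - r) :=
  Finset.mem_filter

lemma IsCluster.subset_rootFinset (hs : IsCluster S f s) : s ⊆ rootFinset f := by
  obtain ⟨-, z, δ, rfl⟩ := hs
  exact Finset.filter_subset _ _

lemma lt_depth_iff : ρ < depth S s ↔ ∀ r ∈ s, ∀ r' ∈ s, (ρ : WithTop ℚ) < S.v (r - r') := by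
  simp only [depth, Finset.lt_inf_iff (WithTop.coe_lt_top ρ)]

lemma IsNPSegment.depth_eq_iff_le (h : IsNPSegment S f q ρ) (hs : s ⊆ rootFinset f) :
    depth S s = ρ ↔ depth S s ≤ ρ :=
  ⟨le_of_eq, fun hle => hle.antisymm <| Finset.le_inf fun _ hr => Finset.le_inf fun _ hr' =>
    h.le_v_sub (hs hr) (hs hr')⟩

lemma lt_depth_openDiscRoots : ρ < depth S (openDiscRoots S f ρ r) := by
  rw [lt_depth_iff]
  intro a ha b hb
  rw [← sub_sub_sub_cancel_right a b r, sub_eq_add_neg (a - r)]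
  refine S.addVal.map_lt_add (mem_openDiscRoots.mp ha).2 ?_
  rw [S.addVal.map_neg]
  exact (mem_openDiscRoots.mp hb).2

lemma isCluster_openDiscRoots (hr : r ∈ rootFinset f) : IsCluster S f (openDiscRoots S f ρ r) := by
  have hself : ρ < S.v (r - r) := by
    rw [sub_self, (S.v_top_iff 0).mpr rfl]
    exact WithTop.coe_lt_top ρ
  have hinf : ρ < (openDiscRoots S f ρ r).inf fun x => S.v (x - r) :=
    (Finset.lt_inf_iff (WithTop.coe_lt_top ρ)).mpr fun x hx => (mem_openDiscRoots.mp hx).2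
  obtain ⟨δ, hρδ, hδ⟩ := WithTop.lt_iff_exists_coe_btwn.mp hinf
  refine ⟨⟨r, mem_openDiscRoots.mpr ⟨hr, hself⟩⟩, r, δ, Finset.ext fun x => ?_⟩
  rw [Finset.mem_filter]
  exact ⟨fun hx => ⟨(mem_openDiscRoots.mp hx).1, hδ.le.trans (Finset.inf_le hx)⟩,
    fun ⟨hx, hδx⟩ => mem_openDiscRoots.mpr ⟨hx, hρδ.trans_le hδx⟩⟩

lemma forall_isCluster_depth_le_iff (N : ℕ) :
    (∀ s, IsCluster S f s → N < s.card → depth S s ≤ ρ) ↔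
      ∀ r ∈ rootFinset f, (openDiscRoots S f ρ r).card ≤ N := by
  constructor
  · intro h r hr
    by_contra! hcard
    exact (h _ (isCluster_openDiscRoots hr) hcard).not_gt lt_depth_openDiscRoots
  · intro h s hs hcard
    by_contra! hdepth
    obtain ⟨r, hr⟩ := hs.1
    have hsub : s ⊆ openDiscRoots S f ρ r := fun x hx =>
      mem_openDiscRoots.mpr ⟨hs.subset_rootFinset hx, lt_depth_iff.mp hdepth x hx r hr⟩
    exact hcard.not_ge ((Finset.card_le_card hsub).trans (h r (hs.subset_rootFinset hr)))

end Cluster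

section Separability

variable {S : Setup K Kbar} {f : K[X]} {π : K} {q : ℤ} {ρ : ℚ}

lemma filter_mk_eq_openDiscRoots {α : Kbar} (hα : S.v α = ρ) {y : Kbar → intRing S}
    (hy : ∀ r ∈ rootFinset f, α * y r = r) {r : Kbar} (hr : r ∈ rootFinset f) :
    ((rootFinset f).filter fun r' =>
      Ideal.Quotient.mk (maxIdeal S) (y r') = Ideal.Quotient.mk (maxIdeal S) (y r)) =
      openDiscRoots S f ρ r := by
  refine Finset.filter_congr fun r' hr' => ?_
  have hval : S.v (r' - r) = ρ + S.v ((y r' : Kbar) - y r) := by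
    rw [← hα, ← S.v_mul, mul_sub, hy r' hr', hy r hr]
  have hcancel : (ρ : WithTop ℚ) + 0 < ρ + S.v ((y r' : Kbar) - y r) ↔
      0 < S.v ((y r' : Kbar) - y r) :=
    WithTop.add_lt_add_iff_left WithTop.coe_ne_top
  rw [mk_maxIdeal_eq_mk_iff, hval, ← hcancel, add_zero]

lemma IsNPSegment.exists_expand_redEdge_eq_C_mul_prod (h : IsNPSegment S f q ρ)
    (hsep : f.Separable) (hπ : S.vK π = (1 : ℚ)) :
    ∃ (u : Residue S) (y : Kbar → Residue S), u ≠ 0 ∧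
      expand (Residue S) ρ.den (redEdge S π f 0 f.natDegree q (-ρ).num (-ρ).den) =
        C u * ∏ r ∈ rootFinset f, (X - C (y r)) ∧
      ∀ r ∈ rootFinset f, ((rootFinset f).filter fun r' => y r' = y r) = openDiscRoots S f ρ r := by
  have := S.algClosed
  obtain ⟨α, hα⟩ := IsAlgClosed.exists_pow_nat_eq (algebraMap K Kbar π ^ ρ.num) ρ.den_pos
  have hvα := v_eq_of_pow_den_eq hπ hα
  have hc : S.v (algebraMap K Kbar π ^ (-q)) = ((-q : ℚ) : WithTop ℚ) := by
    rw [v_algebraMap_zpow hπ, Int.cast_neg]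
  obtain ⟨y, hy⟩ := h.exists_integral_roots hvα
  obtain ⟨u, hu, hG⟩ := h.exists_integral_factorization hsep hc hvα hy
  refine ⟨Ideal.Quotient.mk _ u, fun r => Ideal.Quotient.mk _ (y r), (hu.map _).ne_zero, ?_,
    fun r hr => filter_mk_eq_openDiscRoots hvα hy hr⟩
  rw [h.expand_redEdge_eq_map_mk hπ hα hG]
  simp only [Polynomial.map_mul, Polynomial.map_prod, Polynomial.map_sub, map_C, map_X]

lemma IsNPSegment.separable_redEdge_iff (h : IsNPSegment S f q ρ) (hsep : f.Separable)
    (hπ : S.vK π = (1 : ℚ)) {p : ℕ} [Fact p.Prime] [CharP (Residue S) p] :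
    (redEdge S π f 0 f.natDegree q (-ρ).num (-ρ).den).Separable ↔
      ∀ r ∈ rootFinset f, (openDiscRoots S f ρ r).card ≤ ordProj[p] ρ.den := by
  obtain ⟨u, y, hu, hexpand, hfiber⟩ := h.exists_expand_redEdge_eq_C_mul_prod hsep hπ
  rw [separable_iff_rootMultiplicity_expand_le (p := p) ρ.den_nz
    (h.coeff_zero_redEdge_ne_zero hπ _ (-ρ).den_nz)
    (hexpand ▸ splits_C_mul_prod_X_sub_C _ y u), hexpand]
  simp only [rootMultiplicity_C_mul_prod_X_sub_C _ y hu, forall_card_filter_eq_le_iff]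
  exact forall₂_congr fun r hr => by rw [hfiber r hr]

end Separability

/-- **NP-regularity of a one-edge polygon via clusters.** Suppose `f(0) ≠ 0` and `NP(f)` is a
single edge of slope `−ρ`. Then `f` is NP-regular iff every proper cluster `s ∈ Σ_f` with
`|s| > |ρ|_p` satisfies `d_s = ρ`. -/
theorem npRegular_single_edge_iff_clusters
    (S : Setup K Kbar) (π : K) (hπ : S.vK π = ((1 : ℚ) : WithTop ℚ))
    (p : ℕ) (hp : p.Prime) (hres : ((0 : ℚ) : WithTop ℚ) < S.vK (p : K))
    (f : K[X]) (hsep : f.Separable) (hdeg : 1 ≤ f.natDegree) (h0 : f.coeff 0 ≠ 0)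
    (q0 qd : ℚ) (hNP : IsNPVertices S f 1 ![0, f.natDegree] ![q0, qd])
    (ρ : ℚ) (hslope : (qd - q0) / (f.natDegree : ℚ) = -ρ) :
    NPRegular S π f ↔
      ∀ s : Finset Kbar, IsCluster S f s → 1 < s.card →
        padicNorm p ρ < (s.card : ℚ) → depth S s = ((ρ : ℚ) : WithTop ℚ) := by
  have : Fact p.Prime := ⟨hp⟩
  have : CharP (Residue S) p := charP_residue hp hres
  have hρ : NPslope ![0, f.natDegree] ![q0, qd] 0 = -ρ := by
    rw [← hslope]
    simp [NPslope]
  have hseg : IsNPSegment S f q0 ρ := by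
    simpa [hρ] using hNP.isNPSegment rfl
  obtain ⟨q, rfl⟩ := hseg.exists_intCast_eq
  have hred : NPRegular S π f ↔
      (redEdge S π f 0 f.natDegree q (-ρ).num (-ρ).den).Separable := by
    rw [npRegular_iff_of_single_edge π hNP (q := q) rfl, hρ]
    rfl
  rw [hred, hseg.separable_redEdge_iff hsep hπ (p := p), ← forall_isCluster_depth_le_iff]
  refine forall₂_congr fun s hs => ?_
  rw [← one_lt_and_padicNorm_lt_iff_ordProj_den_lt p ρ, and_imp,
    hseg.depth_eq_iff_le hs.subset_rootFinset]

end ClusterPicture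
end
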